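/- Let m_1, m_2 ∈ R^p, σ_1, σ_2 > 0, and A = (A_1,...,A_p) with i.i.d. N(0,1) entries. Given γ > 0, set α = γ²(σ_1+σ_2)²p/||m_1-m_2||². Then for any τ > 0, P(|⟨m_1-m_2, A/||A||⟩| ≥ γ(σ_1+σ_2)) ≥ P(A_1² > α(1-1/p)(1+τ)/(1-α/p)) · (1 - e^{-(p-1)(τ - log(1+τ))/2}). -/

import Mathlib

open MeasureTheory ProbabilityTheory

/-!
Since the standard Gaussian law is rotation invariant, its orthogonal projections `X` onto a
subspace `K` and `Y` onto `Kᗮ` are independent standard Gaussians. If `‖Y‖² < b` while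
`‖X‖² > q / (1 - q) * b`, then `X + Y` lies in the cone `q * ‖X + Y‖² < ‖X‖²`, so the probability
of that cone is at least the product of the probabilities of these two events. Take for `K` the
line through `m₁ - m₂`, `q = α / p` and `b = (p - 1) * (1 + τ)`: Chernoff's method bounds the
probability of the first event from below, since `‖Y‖²` is the squared norm of a
`(p - 1)`-dimensional standard Gaussian, and `‖X‖²` has the law of the square of one `N(0, 1)`
variable.
-/

open Module
open scoped RealInnerProductSpace NNReal

section GaussianSquare

lemma gaussianPDFReal_mul_exp_mul_sq (v : ℝ≥0) (t x : ℝ) :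
    gaussianPDFReal 0 v x * Real.exp (t * x ^ 2) =
      (Real.sqrt (2 * Real.pi * v))⁻¹ * Real.exp (-((2 * (v : ℝ))⁻¹ - t) * x ^ 2) := by
  rw [gaussianPDFReal, mul_assoc, ← Real.exp_add]
  ring_nf

variable {v : ℝ≥0} {t : ℝ}

lemma integrable_exp_mul_sq_gaussianReal (ht : 2 * v * t < 1) :
    Integrable (fun x ↦ Real.exp (t * x ^ 2)) (gaussianReal 0 v) := by
  rcases eq_or_ne v 0 with rfl | hv
  · rw [gaussianReal_zero_var]
    exact integrable_dirac (by simp)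
  have hb : 0 < (2 * (v : ℝ))⁻¹ - t := by
    rw [sub_pos, ← one_div, lt_div_iff₀' (by positivity)]
    exact ht
  rw [gaussianReal_of_var_ne_zero 0 hv,
    integrable_withDensity_iff_integrable_smul' (measurable_gaussianPDF 0 v)
      (ae_of_all _ fun _ ↦ gaussianPDF_lt_top)]
  simp only [toReal_gaussianPDF, smul_eq_mul, gaussianPDFReal_mul_exp_mul_sq]
  exact (integrable_exp_neg_mul_sq hb).const_mul _

lemma mgf_sq_gaussianReal (ht : 2 * v * t < 1) :
    mgf (fun x ↦ x ^ 2) (gaussianReal 0 v) t = (Real.sqrt (1 - 2 * v * t))⁻¹ := by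
  rcases eq_or_ne v 0 with rfl | hv
  · simp [mgf]
  have hb : (2 * (v : ℝ))⁻¹ - t = (1 - 2 * v * t) / (2 * v) := by field_simp
  rw [mgf, integral_gaussianReal_eq_integral_smul hv]
  simp only [smul_eq_mul, gaussianPDFReal_mul_exp_mul_sq]
  rw [integral_const_mul, integral_gaussian, ← Real.sqrt_inv, ← Real.sqrt_inv,
    ← Real.sqrt_mul (by positivity), hb]
  congr 1
  field_simp

end GaussianSquare

lemma div_div_one_sub_div {F : Type*} [Field F] {b : F} (hb : b ≠ 0) (a : F) :
    a / b / (1 - a / b) = a / (b - a) := by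
  rw [one_sub_div hb, div_div_div_cancel_right₀ hb]

section InnerProductSpace

variable {E : Type*} [NormedAddCommGroup E] [InnerProductSpace ℝ E]

lemma norm_orthogonalProjectionOnto_span_singleton_sq {u : E} (hu : ‖u‖ = 1) (x : E) :
    ‖(ℝ ∙ u).orthogonalProjectionOnto x‖ ^ 2 = ⟪u, x⟫ ^ 2 := by
  rw [Submodule.coe_norm, Submodule.coe_orthogonalProjectionOnto_apply,
    Submodule.starProjection_unit_singleton ℝ hu, norm_smul, hu, mul_one, Real.norm_eq_abs, sq_abs]

lemma mul_norm_sq_lt_norm_orthogonalProjectionOnto_sq {K : Submodule ℝ E}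
    [K.HasOrthogonalProjection] {q b : ℝ} (hq₀ : 0 ≤ q) (hq₁ : q < 1) {x : E}
    (hK : q / (1 - q) * b < ‖K.orthogonalProjectionOnto x‖ ^ 2)
    (hK' : ‖Kᗮ.orthogonalProjectionOnto x‖ ^ 2 < b) :
    q * ‖x‖ ^ 2 < ‖K.orthogonalProjectionOnto x‖ ^ 2 := by
  rw [div_mul_eq_mul_div, div_lt_iff₀ (sub_pos.mpr hq₁)] at hK
  rw [K.norm_sq_eq_add_norm_sq_projection x]
  linarith [mul_le_mul_of_nonneg_left hK'.le hq₀]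

lemma exp_mul_norm_sq_sum_smul {ι : Type*} [Fintype ι] (b : OrthonormalBasis ι ℝ E) (t : ℝ)
    (y : ι → ℝ) :
    Real.exp (t * ‖∑ i, y i • b i‖ ^ 2) = ∏ i, Real.exp (t * y i ^ 2) := by
  rw [← b.sum_sq_inner_right, Finset.mul_sum, Real.exp_sum]
  simp only [b.orthonormal.inner_right_fintype]

end InnerProductSpace

section StdGaussian

variable {E : Type*} [NormedAddCommGroup E] [InnerProductSpace ℝ E] [FiniteDimensional ℝ E]
  [MeasurableSpace E] [BorelSpace E]

variable (E) in
lemma integrable_exp_mul_norm_sq_stdGaussian {t : ℝ} (ht : 2 * t < 1) :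
    Integrable (fun x ↦ Real.exp (t * ‖x‖ ^ 2)) (stdGaussian E) := by
  rw [stdGaussian, integrable_map_measure (by fun_prop) (Measurable.aemeasurable (by fun_prop))]
  simp only [Function.comp_def, exp_mul_norm_sq_sum_smul]
  exact Integrable.fintype_prod fun _ ↦ integrable_exp_mul_sq_gaussianReal (by simpa using ht)

variable (E) in
lemma mgf_norm_sq_stdGaussian {t : ℝ} (ht : 2 * t < 1) :
    mgf (fun x ↦ ‖x‖ ^ 2) (stdGaussian E) t = (Real.sqrt (1 - 2 * t))⁻¹ ^ finrank ℝ E := by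
  have h := mgf_sq_gaussianReal (v := 1) (t := t) (by simpa using ht)
  rw [mgf, stdGaussian, integral_map (Measurable.aemeasurable (by fun_prop)) (by fun_prop)]
  simp only [exp_mul_norm_sq_sum_smul]
  rw [integral_fintype_prod_eq_pow (fun x : ℝ ↦ Real.exp (t * x ^ 2)), Fintype.card_fin]
  simpa [mgf] using congrArg (· ^ finrank ℝ E) h

variable (E) in
lemma stdGaussian_real_le_norm_sq_le_exp {τ : ℝ} (hτ : 0 ≤ τ) :
    (stdGaussian E).real {x | finrank ℝ E * (1 + τ) ≤ ‖x‖ ^ 2} ≤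
      Real.exp (-(finrank ℝ E / 2) * (τ - Real.log (1 + τ))) := by
  have hτ' : 0 < 1 + τ := by linarith
  -- The minimiser of `t ↦ exp (-t * n * (1 + τ)) * (1 - 2 * t) ^ (-n / 2)`.
  set t : ℝ := τ / (2 * (1 + τ)) with ht_def
  have ht : 1 - 2 * t = (1 + τ)⁻¹ := by rw [ht_def]; field_simp; ring
  have ht_lt : 2 * t < 1 := by linarith [inv_pos.mpr hτ']
  have hsqrt : Real.sqrt (1 + τ) = Real.exp (Real.log (1 + τ) / 2) := by
    rw [← Real.log_sqrt hτ'.le, Real.exp_log (Real.sqrt_pos.mpr hτ')]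
  refine (measure_ge_le_exp_mul_mgf _ (by positivity)
    (integrable_exp_mul_norm_sq_stdGaussian E ht_lt)).trans_eq ?_
  rw [mgf_norm_sq_stdGaussian E ht_lt, ht, Real.sqrt_inv, inv_inv, hsqrt, ← Real.exp_nat_mul,
    ← Real.exp_add, ht_def]
  congr 1
  field_simp
  ring

variable (E) in
lemma one_sub_exp_le_stdGaussian_real_norm_sq_lt {τ : ℝ} (hτ : 0 ≤ τ) :
    1 - Real.exp (-(finrank ℝ E / 2) * (τ - Real.log (1 + τ))) ≤
      (stdGaussian E).real {x | ‖x‖ ^ 2 < finrank ℝ E * (1 + τ)} := by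
  have hcompl : {x : E | ‖x‖ ^ 2 < finrank ℝ E * (1 + τ)} =
      {x | finrank ℝ E * (1 + τ) ≤ ‖x‖ ^ 2}ᶜ := by
    ext; simp
  rw [hcompl, probReal_compl_eq_one_sub (measurableSet_le (by fun_prop) (by fun_prop))]
  exact sub_le_sub_left (stdGaussian_real_le_norm_sq_le_exp E hτ) 1

lemma map_inner_stdGaussian (u : E) :
    (stdGaussian E).map (fun x ↦ ⟪u, x⟫) = gaussianReal 0 (‖u‖₊ ^ 2) := by
  have h := IsGaussian.map_eq_gaussianReal (μ := stdGaussian E) (innerSL ℝ u)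
  rwa [integral_strongDual_stdGaussian, variance_dual_stdGaussian, innerSL_apply_norm,
    ← coe_nnnorm, ← NNReal.coe_pow, Real.toNNReal_coe] at h

lemma map_orthogonalProjectionOnto_prodMk_stdGaussian (K : Submodule ℝ E) :
    (stdGaussian E).map
        (fun x ↦ (K.orthogonalProjectionOnto x, Kᗮ.orthogonalProjectionOnto x)) =
      (stdGaussian K).prod (stdGaussian Kᗮ) := by
  rw [← charFun_eq_prod_iff, Measure.map_map (by fun_prop) (by fun_prop)]
  intro t
  have h : WithLp.toLp 2 ∘ (fun x ↦ (K.orthogonalProjectionOnto x, Kᗮ.orthogonalProjectionOnto x)) =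
      K.orthogonalDecomposition := by
    ext1 x; exact (K.orthogonalDecomposition_apply x).symm
  rw [h, stdGaussian_map]
  simp only [charFun_stdGaussian, ← Complex.exp_add]
  congr 1
  rw [← Complex.ofReal_pow, WithLp.prod_norm_sq_eq_of_L2, Complex.ofReal_add, neg_add, add_div,
    Complex.ofReal_pow, Complex.ofReal_pow]
  rfl

lemma map_orthogonalProjectionOnto_stdGaussian (K : Submodule ℝ E) :
    (stdGaussian E).map K.orthogonalProjectionOnto = stdGaussian K := by
  have h := congrArg Measure.fst (map_orthogonalProjectionOnto_prodMk_stdGaussian K)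
  rwa [Measure.fst_map_prodMk (by fun_prop), Measure.fst_prod] at h

lemma mul_le_stdGaussian_real_mul_norm_sq_lt (K : Submodule ℝ E) {q : ℝ} (hq₀ : 0 ≤ q)
    (hq₁ : q < 1) (b : ℝ) :
    (stdGaussian K).real {y | q / (1 - q) * b < ‖y‖ ^ 2} *
        (stdGaussian Kᗮ).real {z | ‖z‖ ^ 2 < b} ≤
      (stdGaussian E).real {x | q * ‖x‖ ^ 2 < ‖K.orthogonalProjectionOnto x‖ ^ 2} := by
  have hmeas : MeasurableSet ({y : K | q / (1 - q) * b < ‖y‖ ^ 2} ×ˢ {z : Kᗮ | ‖z‖ ^ 2 < b}) :=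
    (measurableSet_lt (by fun_prop) (by fun_prop)).prod
      (measurableSet_lt (by fun_prop) (by fun_prop))
  rw [← measureReal_prod_prod, ← map_orthogonalProjectionOnto_prodMk_stdGaussian,
    map_measureReal_apply (by fun_prop) hmeas]
  refine measureReal_mono fun x hx ↦ ?_
  exact mul_norm_sq_lt_norm_orthogonalProjectionOnto_sq hq₀ hq₁ hx.1 hx.2

lemma stdGaussian_span_singleton_real_lt_norm_sq {u : E} (hu : ‖u‖ = 1) (β : ℝ) :
    (stdGaussian (ℝ ∙ u)).real {y | β < ‖y‖ ^ 2} = (gaussianReal 0 1).real {y | β < y ^ 2} := by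
  have hu' : ‖u‖₊ = 1 := NNReal.eq hu
  have hlaw : (stdGaussian E).map (fun x ↦ ⟪u, x⟫) = gaussianReal 0 1 := by
    rw [map_inner_stdGaussian, hu', one_pow]
  rw [← map_orthogonalProjectionOnto_stdGaussian, ← hlaw,
    map_measureReal_apply (by fun_prop) (measurableSet_lt (by fun_prop) (by fun_prop)),
    map_measureReal_apply (by fun_prop) (measurableSet_lt (by fun_prop) (by fun_prop))]
  simp only [Set.preimage_ofPred_eq, norm_orthogonalProjectionOnto_span_singleton_sq hu]

theorem mul_le_stdGaussian_real_mul_norm_sq_lt_inner_sq {u : E} (hu : ‖u‖ = 1) {q : ℝ}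
    (hq₀ : 0 ≤ q) (hq₁ : q < 1) {τ : ℝ} (hτ : 0 ≤ τ) :
    (gaussianReal 0 1).real {y | q / (1 - q) * ((finrank ℝ E - 1) * (1 + τ)) < y ^ 2} *
        (1 - Real.exp (-((finrank ℝ E - 1) / 2) * (τ - Real.log (1 + τ)))) ≤
      (stdGaussian E).real {x | q * ‖x‖ ^ 2 < ⟪u, x⟫ ^ 2} := by
  have hdim : (finrank ℝ (ℝ ∙ u)ᗮ : ℝ) = finrank ℝ E - 1 := by
    rw [eq_sub_iff_add_eq', ← (ℝ ∙ u).finrank_add_finrank_orthogonal,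
      finrank_span_singleton (norm_ne_zero_iff.mp (hu ▸ one_ne_zero))]
    push_cast
    rfl
  rw [← hdim, ← stdGaussian_span_singleton_real_lt_norm_sq hu]
  simp only [← norm_orthogonalProjectionOnto_span_singleton_sq hu]
  exact (mul_le_mul_of_nonneg_left (one_sub_exp_le_stdGaussian_real_norm_sq_lt _ hτ)
    measureReal_nonneg).trans (mul_le_stdGaussian_real_mul_norm_sq_lt (ℝ ∙ u) hq₀ hq₁ _)

theorem mul_le_stdGaussian_real_le_abs_inner_div_norm {v : E} {c : ℝ} (hcv : c ^ 2 < ‖v‖ ^ 2)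
    {τ : ℝ} (hτ : 0 ≤ τ) :
    (gaussianReal 0 1).real
          {y | c ^ 2 / (‖v‖ ^ 2 - c ^ 2) * ((finrank ℝ E - 1) * (1 + τ)) < y ^ 2} *
        (1 - Real.exp (-((finrank ℝ E - 1) / 2) * (τ - Real.log (1 + τ)))) ≤
      (stdGaussian E).real {x | c ≤ |⟪v, x⟫| / ‖x‖} := by
  have hv_sq : 0 < ‖v‖ ^ 2 := (sq_nonneg c).trans_lt hcv
  have hv : v ≠ 0 := by
    rintro rfl
    simp at hv_sq
  have hu : ‖‖v‖⁻¹ • v‖ = 1 := norm_smul_inv_norm (𝕜 := ℝ) hv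
  rw [← div_div_one_sub_div hv_sq.ne']
  refine (mul_le_stdGaussian_real_mul_norm_sq_lt_inner_sq hu (by positivity)
    ((div_lt_one hv_sq).mpr hcv) hτ).trans (measureReal_mono fun x hx ↦ ?_)
  have hx₀ : x ≠ 0 := by
    rintro rfl
    simp at hx
  have hcx : (c * ‖x‖) ^ 2 < ⟪v, x⟫ ^ 2 := by
    rw [Set.mem_ofPred_eq, real_inner_smul_left, mul_pow, inv_pow, inv_mul_eq_div,
      div_mul_eq_mul_div, div_lt_div_iff_of_pos_right hv_sq] at hx
    rwa [mul_pow]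
  exact (le_div_iff₀ (norm_pos_iff.mpr hx₀)).mpr (le_of_abs_le (sq_lt_sq.mp hcx).le)

end StdGaussian

lemma pi_gaussianReal_real_le_abs_sum_div_sqrt {ι : Type*} [Fintype ι] (w : ι → ℝ) (c : ℝ) :
    (Measure.pi fun _ : ι ↦ gaussianReal 0 1).real
        {a | c ≤ |∑ i, w i * a i| / Real.sqrt (∑ i, a i ^ 2)} =
      (stdGaussian (EuclideanSpace ℝ ι)).real {x | c ≤ |⟪WithLp.toLp 2 w, x⟫| / ‖x‖} := by
  rw [← map_pi_eq_stdGaussian, map_measureReal_apply (by fun_prop)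
    (measurableSet_le (by fun_prop) (by fun_prop))]
  simp [PiLp.inner_apply, EuclideanSpace.norm_eq, mul_comm]

lemma pi_gaussianReal_real_lt_eval_sq {ι : Type*} [Fintype ι] (i : ι) (β : ℝ) :
    (Measure.pi fun _ : ι ↦ gaussianReal 0 1).real {a | β < a i ^ 2} =
      (gaussianReal 0 1).real {y | β < y ^ 2} := by
  have hmeas : MeasurableSet {y : ℝ | β < y ^ 2} := measurableSet_lt (by fun_prop) (by fun_prop)
  exact (measurePreserving_eval (fun _ ↦ gaussianReal 0 1) i).measureReal_preimage
    hmeas.nullMeasurableSet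

/-- Theorem 1: for `m₁, m₂ ∈ ℝ^p`, `σ₁, σ₂ > 0`, `A` with i.i.d. `N(0,1)` entries,
`γ > 0` and `α = γ²(σ₁+σ₂)²p/‖m₁-m₂‖²`, for any `τ > 0`,
`P(|⟨m₁-m₂, A/‖A‖⟩| ≥ γ(σ₁+σ₂)) ≥ P(A₁² > α(1-1/p)(1+τ)/(1-α/p)) · (1 - e^{-(p-1)(τ-log(1+τ))/2})`. -/
theorem prob_separability_lower_bound (p : ℕ) (hp : 0 < p) (m₁ m₂ : Fin p → ℝ)
    (hm : m₁ ≠ m₂) (σ₁ σ₂ : ℝ) (hσ₁ : 0 < σ₁) (hσ₂ : 0 < σ₂) (γ : ℝ) (hγ : 0 < γ)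
    (α : ℝ) (hα : α = γ ^ 2 * (σ₁ + σ₂) ^ 2 * p / (∑ i, (m₁ i - m₂ i) ^ 2))
    (hαp : α / p < 1) (τ : ℝ) (hτ : 0 < τ) :
    ((Measure.pi fun _ : Fin p => gaussianReal 0 1)
        {a | γ * (σ₁ + σ₂) ≤ |∑ i, (m₁ i - m₂ i) * a i| / Real.sqrt (∑ i, (a i) ^ 2)}).toReal
      ≥ ((Measure.pi fun _ : Fin p => gaussianReal 0 1)
            {a | α * (1 - 1 / (p : ℝ)) / (1 - α / p) * (1 + τ) < (a ⟨0, hp⟩) ^ 2}).toReal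
        * (1 - Real.exp (-(((p : ℝ) - 1) / 2) * (τ - Real.log (1 + τ)))) := by
  set v : EuclideanSpace ℝ (Fin p) := WithLp.toLp 2 (m₁ - m₂) with hv
  set c : ℝ := γ * (σ₁ + σ₂) with hc
  have hv_sq : 0 < ‖v‖ ^ 2 := by
    have : v ≠ 0 := by simpa [hv, sub_eq_zero] using hm
    positivity
  have hα_div : α / p = c ^ 2 / ‖v‖ ^ 2 := by
    rw [hα, EuclideanSpace.real_norm_sq_eq, hc, mul_pow]
    simp only [hv, Pi.sub_apply]
    field_simp
  have hcv : c ^ 2 < ‖v‖ ^ 2 := (div_lt_one hv_sq).mp (hα_div ▸ hαp)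
  have hthreshold : α * (1 - 1 / (p : ℝ)) / (1 - α / p) * (1 + τ) =
      c ^ 2 / (‖v‖ ^ 2 - c ^ 2) * ((p - 1) * (1 + τ)) := by
    rw [← div_div_one_sub_div hv_sq.ne', ← hα_div]
    field_simp
  have hbound := mul_le_stdGaussian_real_le_abs_inner_div_norm hcv hτ.le
  rw [finrank_euclideanSpace_fin, ← hthreshold, ← pi_gaussianReal_real_lt_eval_sq (⟨0, hp⟩ : Fin p),
    ← pi_gaussianReal_real_le_abs_sum_div_sqrt] at hbound
  exact hbound
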